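/- arXiv:2202.02599 — 4 statements merged into one kernel-verified Lean document; each statement's English description precedes it below -/
import Mathlib

section
/- Let G be a connected graph, P a longest path in G, and Q a shortest path from a vertex v ∉ V(P) to V(P). Then the length of Q is at most half the length of P. -/
open SimpleGraph

variable {V : Type*} [Fintype V] [DecidableEq V]

/-- Distance from a vertex `u` to the vertex set of a walk `P`. -/
noncomputable def walkDist (G : SimpleGraph V) {a b : V} (P : G.Walk a b) (u : V) : ℕ :=
  P.support.toFinset.inf' ⟨a, List.mem_toFinset.mpr P.start_mem_support⟩ (fun x => G.dist u x)

/-- Eccentricity of a walk: max distance from any vertex of `G` to the walk. -/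
noncomputable def eccW (G : SimpleGraph V) {a b : V} (P : G.Walk a b) : ℕ :=
  Finset.univ.sup (walkDist G P)

/-- Path eccentricity of a graph. -/
noncomputable def pe (G : SimpleGraph V) : ℕ :=
  sInf {m | ∃ (a b : V) (P : G.Walk a b), P.IsPath ∧ eccW G P = m}

/-- `P` is a longest path in `G`. -/
def IsLongestPath (G : SimpleGraph V) {a b : V} (P : G.Walk a b) : Prop :=
  P.IsPath ∧ ∀ (c d : V) (Q : G.Walk c d), Q.IsPath → Q.length ≤ P.length

/-- `G` is `k`-connected. -/
def KConnected (k : ℕ) (G : SimpleGraph V) : Prop :=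
  k + 1 ≤ Fintype.card V ∧
    ∀ S : Finset V, S.card < k → (G.induce ((↑S : Set V)ᶜ)).Connected

section AppendPath

variable {W : Type*} {G : SimpleGraph W} {a b c v : W}

theorem isPath_append_of_forall_mem_support_eq {p : G.Walk a b} {q : G.Walk b c}
    (hp : p.IsPath) (hq : q.IsPath) (h : ∀ x ∈ p.support, x ∈ q.support → x = b) :
    (p.append q).IsPath := by
  have hq_nodup : (b :: q.support.tail).Nodup := by
    simpa only [Walk.cons_tail_support] using hq.support_nodup
  obtain ⟨hb, htail⟩ := List.nodup_cons.mp hq_nodup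
  have hdisj : p.support.Disjoint q.support.tail := fun x hxp hxq =>
    hb (h x hxp (List.mem_of_mem_tail hxq) ▸ hxq)
  rw [Walk.isPath_def, Walk.support_append]
  exact hp.support_nodup.append htail hdisj

/-- The vertex `c` cuts `P` into two pieces, and `Q` followed by the longer piece is a path. -/
theorem exists_isPath_length_add_two_mul_length_le {P : G.Walk a b} {Q : G.Walk v c}
    (hP : P.IsPath) (hQ : Q.IsPath) (hc : c ∈ P.support)
    (hmeet : ∀ x ∈ Q.support, x ∈ P.support → x = c) :
    ∃ (d : W) (R : G.Walk v d), R.IsPath ∧ P.length + 2 * Q.length ≤ 2 * R.length := by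
  obtain ⟨p, q, hp, hq, rfl⟩ := hP.mem_support_iff_exists_append.mp hc
  have hQp : (Q.append p.reverse).IsPath :=
    isPath_append_of_forall_mem_support_eq hQ hp.reverse fun x hxQ hxp =>
      hmeet x hxQ (Walk.support_subset_support_append_left p q (by simpa using hxp))
  have hQq : (Q.append q).IsPath :=
    isPath_append_of_forall_mem_support_eq hQ hq fun x hxQ hxq =>
      hmeet x hxQ (Walk.support_subset_support_append_right p q hxq)
  rcases le_total q.length p.length with hle | hle
  · refine ⟨a, Q.append p.reverse, hQp, ?_⟩
    simp only [Walk.length_append, Walk.length_reverse]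
    lia
  · refine ⟨b, Q.append q, hQq, ?_⟩
    simp only [Walk.length_append]
    lia

theorem stmt2_general {P : G.Walk a b} {Q : G.Walk v c} (hP : P.IsPath)
    (hmax : ∀ (d : W) (R : G.Walk v d), R.IsPath → R.length ≤ P.length)
    (hQ : Q.IsPath) (hc : c ∈ P.support)
    (hmeet : ∀ x ∈ Q.support, x ∈ P.support → x = c) :
    (Q.length : ℝ) ≤ (P.length : ℝ) / 2 := by
  obtain ⟨d, R, hR, hlong⟩ := exists_isPath_length_add_two_mul_length_le hP hQ hc hmeet
  have htwice : Q.length * 2 ≤ P.length := by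
    have := hmax d R hR
    lia
  rw [le_div_iff₀ two_pos]
  exact_mod_cast htwice

end AppendPath

theorem stmt2 (G : SimpleGraph V) (hG : G.Connected) {a b v c : V}
    (P : G.Walk a b) (hP : IsLongestPath G P)
    (hv : v ∉ P.support) (Q : G.Walk v c) (hQ : Q.IsPath)
    (hc : c ∈ P.support)
    (hmeet : ∀ x ∈ Q.support, x ∈ P.support → x = c)
    (hshort : Q.length = walkDist G P v) :
    (Q.length : ℝ) ≤ (P.length : ℝ) / 2 :=
  stmt2_general hP.1 (hP.2 v) hQ hc hmeet
end

section
/- Let G be a k-connected graph with k ≥ 2 and let P be a longest path in G with L edges. Then ecc_G(P) ≤ (L + 2)/(2k + 2). -/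
open SimpleGraph

variable {V : Type*} [Fintype V] [DecidableEq V]

/-! Let `u` be a vertex at distance `e = ecc P` from `P`. Since `P` has at least `k` vertices,
Menger's theorem gives `k` paths from `u` to distinct vertices of `P`, sharing only `u` and meeting
`P` only at their ends, each of length at least `e`. Going down one of them and up another makes an
ear of `P` of length at least `2e`. As `P` is longest, rerouting it along these ears shows that the
`k` feet are pairwise at least `2e` apart on `P`, and at least `2e - 1` away from both ends of `P`.
Hence `2 (2e - 1) + (k - 1) 2e ≤ L`, which is the bound.

Menger's theorem is deduced from Hall's: disjoint paths from `A` to `B` indexed by `ι` are the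
orbits of a permutation of `α ⊕ ι` that moves along edges, enters `A` from `ι` and returns to `ι`
from `B`, and a violation of Hall's condition for such a permutation yields a separator with too few
vertices. -/

section FirstReturn

variable {β : Type*} {f : β → β} {s : Set β} {x y : β} {m n : ℕ}

/-- The orbit of `x` under `f` stays outside `s` at the times `1, …, n`. Time `0` is excluded, so
that an excursion may start in `s`. -/
def AvoidsUpTo (f : β → β) (s : Set β) (x : β) (n : ℕ) : Prop :=
  ∀ l, 0 < l → l ≤ n → f^[l] x ∉ s

theorem AvoidsUpTo.mono (h : AvoidsUpTo f s x n) (hmn : m ≤ n) : AvoidsUpTo f s x m :=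
  fun l hl hlm => h l hl (hlm.trans hmn)

theorem exists_avoidsUpTo_iterate_succ_mem [Finite β] (hf : Function.Injective f) (hx : x ∈ s) :
    ∃ n, AvoidsUpTo f s x n ∧ f^[n + 1] x ∈ s := by
  classical
  have hreturn : ∃ n, f^[n + 1] x ∈ s := by
    obtain ⟨n, hn, hper⟩ := Function.mem_periodicPts.1 (hf.mem_periodicPts x)
    obtain ⟨n, rfl⟩ := Nat.exists_eq_succ_of_ne_zero hn.ne'
    exact ⟨n, by rwa [hper.eq]⟩
  refine ⟨Nat.find hreturn, fun l hl hle hmem => ?_, Nat.find_spec hreturn⟩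
  obtain ⟨l, rfl⟩ := Nat.exists_eq_succ_of_ne_zero hl.ne'
  exact Nat.find_min hreturn hle hmem

theorem AvoidsUpTo.eq_of_iterate_eq (hf : Function.Injective f) (hx : x ∈ s) (hy : y ∈ s)
    (hxm : AvoidsUpTo f s x m) (hyn : AvoidsUpTo f s y n) (h : f^[m] x = f^[n] y) :
    m = n ∧ x = y := by
  wlog hmn : m ≤ n generalizing m n x y
  · exact (this hy hx hyn hxm h.symm (le_of_not_ge hmn)).imp Eq.symm Eq.symm
  obtain ⟨d, rfl⟩ := Nat.exists_eq_add_of_le hmn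
  have hxy : x = f^[d] y := hf.iterate m (by rwa [← Function.iterate_add_apply])
  obtain rfl | hd := Nat.eq_zero_or_pos d
  · exact ⟨rfl, hxy⟩
  · exact absurd (hxy ▸ hx) (hyn d hd (Nat.le_add_left d m))

end FirstReturn

section Menger

variable {α ι : Type*} {G : SimpleGraph α} {A B : Set α}

/-- `S` separates `A` from `B` in `G`: every walk from `A` to `B` meets `S`. The set `S` may contain
vertices of `A` and `B`. -/
def Separates (G : SimpleGraph α) (A B S : Set α) : Prop :=
  ∀ ⦃a b⦄ (W : G.Walk a b), a ∈ A → b ∈ B → ∃ v ∈ W.support, v ∈ S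

/-- A linkage from `A` to `B`: pairwise disjoint paths from `A` to `B`, each of them meeting `B`
only in its last vertex. -/
structure IsLinkage (A B : Set α) {a b : ι → α} (W : ∀ i, G.Walk (a i) (b i)) : Prop where
  start_mem : ∀ i, a i ∈ A
  end_mem : ∀ i, b i ∈ B
  isPath : ∀ i, (W i).IsPath
  eq_end : ∀ i, ∀ v ∈ (W i).support, v ∈ B → v = b i
  disjoint : ∀ i j, i ≠ j → (W i).support.Disjoint (W j).support

/-- The moves by which a linkage from `A` to `B` indexed by `ι` is encoded as a permutation of
`α ⊕ ι`: an index moves to the start of its path, a vertex on a path moves to the next one, the end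
of a path moves back to some index, and the remaining vertices stay fixed. -/
inductive LinkageStep (G : SimpleGraph α) (A B : Set α) : α ⊕ ι → α ⊕ ι → Prop
  | start (i : ι) {a : α} (ha : a ∈ A) : LinkageStep G A B (.inr i) (.inl a)
  | stay (v : α) : LinkageStep G A B (.inl v) (.inl v)
  | edge {v w : α} (hv : v ∉ B) (hvw : G.Adj v w) : LinkageStep G A B (.inl v) (.inl w)
  | finish {b : α} (hb : b ∈ B) (i : ι) : LinkageStep G A B (.inl b) (.inr i)

theorem LinkageStep.exists_eq_inl {i : ι} {z : α ⊕ ι} (h : LinkageStep G A B (.inr i) z) :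
    ∃ a ∈ A, z = .inl a := by
  cases h with
  | start _ ha => exact ⟨_, ha, rfl⟩

theorem separates_diff {X T : Set α} (hA : A ⊆ T) (hX : ∀ v ∈ X, ∀ w, G.Adj v w → w ∈ T)
    (hB : Disjoint X B) : Separates G A B (T \ X) := by
  suffices h : ∀ ⦃a b⦄ (W : G.Walk a b), a ∈ T → b ∈ B → ∃ v ∈ W.support, v ∈ T \ X from
    fun a b W ha hb => h W (hA ha) hb
  intro a b W ha hb
  induction W with
  | nil => exact ⟨_, by simp, ha, fun haX => hB.notMem_of_mem_left haX hb⟩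
  | @cons a c b hac W ih =>
    by_cases haX : a ∈ X
    · obtain ⟨v, hv, hvTX⟩ := ih (hX a haX c hac) hb
      exact ⟨v, by simp [hv], hvTX⟩
    · exact ⟨a, by simp, ha, haX⟩

theorem card_le_card_linkageStep [Fintype α] [Fintype ι]
    [DecidableRel (LinkageStep (ι := ι) G A B)]
    (hsep : ∀ S : Finset α, Separates G A B S → Fintype.card ι ≤ S.card) (Y : Finset (α ⊕ ι)) :
    Y.card ≤ (Finset.univ.filter fun z => ∃ y ∈ Y, LinkageStep G A B y z).card := by
  classical
  set N := Finset.univ.filter fun z => ∃ y ∈ Y, LinkageStep G A B y z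
  have hstay : Y.toLeft ⊆ N.toLeft := fun v hv => by
    simpa [N] using .inl ⟨v, by simpa using hv, .stay v⟩
  by_cases hreach : ∀ i, .inr i ∈ Y → ∃ b ∈ B, .inl b ∈ Y
  · refine Finset.card_le_card fun y hy => ?_
    obtain v | i := y
    · simpa using hstay (by simpa using hy)
    · obtain ⟨b, hb, hbY⟩ := hreach i hy
      exact Finset.mem_filter.2 ⟨Finset.mem_univ _, _, hbY, .finish hb i⟩
  push Not at hreach
  obtain ⟨i, hi, hYB⟩ := hreach
  have hS : Separates G A B ↑(N.toLeft \ Y.toLeft) := by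
    rw [Finset.coe_sdiff]
    refine separates_diff (fun a ha => ?_) (fun v hv w hvw => ?_) ?_
    · simpa [N] using .inr ⟨i, hi, .start i ha⟩
    · have hv : Sum.inl v ∈ Y := by simpa using hv
      simpa [N] using .inl ⟨v, hv, .edge (fun hvB => hYB v hvB hv) hvw⟩
    · exact Set.disjoint_left.2 fun v hv hvB => hYB v hvB (by simpa using hv)
  calc Y.card = Y.toLeft.card + Y.toRight.card := Finset.card_toLeft_add_card_toRight.symm
    _ ≤ Y.toLeft.card + (N.toLeft \ Y.toLeft).card := by
        gcongr; exact (Finset.card_le_univ _).trans (hsep _ hS)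
    _ = N.toLeft.card := by rw [add_comm, Finset.card_sdiff_add_card_eq_card hstay]
    _ ≤ N.card := Finset.card_toLeft_le

theorem exists_injective_linkageStep [Finite α] [Fintype ι]
    (hsep : ∀ S : Finset α, Separates G A B S → Fintype.card ι ≤ S.card) :
    ∃ f : α ⊕ ι → α ⊕ ι, Function.Injective f ∧ ∀ x, LinkageStep G A B x (f x) := by
  classical
  cases nonempty_fintype α
  exact (Fintype.all_card_le_filter_rel_iff_exists_injective (LinkageStep G A B)).1
    (card_le_card_linkageStep hsep)

section Orbit

variable {f : α ⊕ ι → α ⊕ ι} (hf : Function.Injective f) (hstep : ∀ x, LinkageStep G A B x (f x))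
include hf hstep

theorem exists_isPath_of_avoidsUpTo (i : ι) (n : ℕ)
    (hn : AvoidsUpTo f (Set.range .inr) (.inr i) (n + 1)) :
    ∃ a ∈ A, ∃ v, ∃ W : G.Walk a v, f^[n + 1] (.inr i) = .inl v ∧ W.IsPath ∧
      (∀ w ∈ W.support, w ∈ B → w = v) ∧ ∀ w ∈ W.support, ∃ l ≤ n, f^[l + 1] (.inr i) = .inl w := by
  induction n with
  | zero =>
    obtain ⟨a, ha, hfi⟩ := (hstep (.inr i)).exists_eq_inl
    exact ⟨a, ha, a, .nil, hfi, .nil, by simp, by simp [hfi]⟩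
  | succ n ih =>
    obtain ⟨a, ha, v, W, hv, hW, hWB, hWf⟩ := ih (hn.mono (Nat.le_succ _))
    have hfv : f^[n + 2] (.inr i) = f (.inl v) := by rw [Function.iterate_succ_apply', hv]
    obtain ⟨w, hw⟩ : ∃ w, f (.inl v) = .inl w := by
      rw [← hfv, ← Sum.isLeft_iff, ← Sum.not_isRight, Sum.isRight_iff]
      simpa [eq_comm] using hn (n + 2) (by omega) le_rfl
    have hwW : w ∉ W.support := fun h => by
      obtain ⟨l, hl, hlw⟩ := hWf w h
      have := (AvoidsUpTo.eq_of_iterate_eq hf (Set.mem_range_self i) (Set.mem_range_self i)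
        (hn.mono (by omega)) hn (hlw.trans (hfv.trans hw).symm)).1
      omega
    obtain ⟨hvB, hvw⟩ : v ∉ B ∧ G.Adj v w := by
      cases hw ▸ hstep (.inl v) with
      | stay => exact absurd W.end_mem_support hwW
      | edge hvB hvw => exact ⟨hvB, hvw⟩
    refine ⟨a, ha, w, W.concat hvw, hfv.trans hw, hW.concat hwW hvw, ?_, ?_⟩
    · simp only [Walk.support_concat, List.mem_append, List.mem_singleton]
      rintro z (hz | rfl) hzB
      · exact absurd (hWB z hz hzB ▸ hzB) hvB
      · rfl
    · simp only [Walk.support_concat, List.mem_append, List.mem_singleton]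
      rintro z (hz | rfl)
      · obtain ⟨l, hl, hlz⟩ := hWf z hz
        exact ⟨l, hl.trans (Nat.le_succ n), hlz⟩
      · exact ⟨n + 1, le_rfl, hfv.trans hw⟩

theorem exists_isPath_of_linkageStep [Finite α] [Finite ι] (i : ι) :
    ∃ a ∈ A, ∃ b ∈ B, ∃ W : G.Walk a b, W.IsPath ∧ (∀ w ∈ W.support, w ∈ B → w = b) ∧
      ∀ w ∈ W.support, ∃ l, AvoidsUpTo f (Set.range .inr) (.inr i) l ∧
        f^[l] (.inr i) = .inl w := by
  obtain ⟨n, hn, j, hj⟩ := exists_avoidsUpTo_iterate_succ_mem hf (s := Set.range .inr) ⟨i, rfl⟩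
  cases n with
  | zero =>
    obtain ⟨a, -, hfi⟩ := (hstep (.inr i)).exists_eq_inl
    exact absurd (hj.trans hfi) Sum.inr_ne_inl
  | succ n =>
    obtain ⟨a, ha, b, W, hb, hW, hWB, hWf⟩ := exists_isPath_of_avoidsUpTo hf hstep i n hn
    rw [Function.iterate_succ_apply', hb] at hj
    refine ⟨a, ha, b, ?_, W, hW, hWB, fun w hw => ?_⟩
    · cases hj ▸ hstep (.inl b) with
      | finish hb => exact hb
    · obtain ⟨l, hl, hlw⟩ := hWf w hw
      exact ⟨l + 1, hn.mono (by omega), hlw⟩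

end Orbit

theorem exists_isLinkage_of_forall_separates [Finite α] [Fintype ι]
    (hsep : ∀ S : Finset α, Separates G A B S → Fintype.card ι ≤ S.card) :
    ∃ (a b : ι → α) (W : ∀ i, G.Walk (a i) (b i)), IsLinkage A B W := by
  obtain ⟨f, hf, hstep⟩ := exists_injective_linkageStep hsep
  choose a ha b hb W hW hWB hWf using exists_isPath_of_linkageStep hf hstep
  refine ⟨a, b, W, ha, hb, hW, hWB, fun i j hij v hvi hvj => ?_⟩
  obtain ⟨l, hl, hlv⟩ := hWf i v hvi
  obtain ⟨m, hm, hmv⟩ := hWf j v hvj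
  exact hij (Sum.inr_injective (AvoidsUpTo.eq_of_iterate_eq hf (Set.mem_range_self i)
    (Set.mem_range_self j) hl hm (hlv.trans hmv.symm)).2)

end Menger

section Fan

variable {α ι : Type*} {G : SimpleGraph α} {u : α} {B : Set α}

/-- A fan from `u` to `B`: paths from `u` to `B` which pairwise share only `u` and each of which
meets `B` only in its last vertex. -/
structure IsFan (u : α) (B : Set α) {t : ι → α} (W : ∀ i, G.Walk u (t i)) : Prop where
  isPath : ∀ i, (W i).IsPath
  end_mem : ∀ i, t i ∈ B
  eq_end : ∀ i, ∀ v ∈ (W i).support, v ∈ B → v = t i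
  eq_start : ∀ i j, i ≠ j → ∀ v ∈ (W i).support, v ∈ (W j).support → v = u

theorem isPath_append {v w : α} {p : G.Walk u v} {q : G.Walk v w} (hp : p.IsPath) (hq : q.IsPath)
    (hpq : ∀ x ∈ p.support, x ∈ q.support → x = v) : (p.append q).IsPath := by
  rw [Walk.isPath_def, Walk.support_append, List.nodup_append']
  refine ⟨hp.support_nodup, hq.support_nodup.sublist (List.tail_sublist _), fun x hxp hxq => ?_⟩
  obtain rfl := hpq x hxp (List.mem_of_mem_tail hxq)
  exact (List.nodup_cons.1 (q.cons_tail_support ▸ hq.support_nodup)).1 hxq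

theorem exists_isFan_of_isLinkage {a b : ι → ({u}ᶜ : Set α)}
    {W : ∀ i, (G.induce {u}ᶜ).Walk (a i) (b i)} (hu : u ∉ B)
    (hW : IsLinkage {v : ({u}ᶜ : Set α) | G.Adj u v} (Subtype.val ⁻¹' B) W) :
    ∃ W' : ∀ i, G.Walk u (b i), IsFan u B W' := by
  obtain ⟨W', hpath, hsupp⟩ : ∃ W' : ∀ i, G.Walk (a i : α) (b i), (∀ i, (W' i).IsPath) ∧
      ∀ i, (W' i).support = (W i).support.map Subtype.val :=
    ⟨fun i => (W i).map (Embedding.induce _).toHom,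
      fun i => (hW.isPath i).map Subtype.val_injective, fun i => Walk.support_map _ (W i)⟩
  have hmem : ∀ {i v}, v ∈ (W' i).support → ∃ hv : v ≠ u, ⟨v, hv⟩ ∈ (W i).support := fun h => by
    obtain ⟨v, hv, rfl⟩ := List.mem_map.1 (hsupp _ ▸ h)
    exact ⟨v.2, hv⟩
  refine ⟨fun i => .cons (hW.start_mem i) (W' i), fun i => (hpath i).cons fun h => ?_,
    hW.end_mem, fun i v hv hvB => ?_, fun i j hij v hvi hvj => ?_⟩
  · obtain ⟨huu, -⟩ := hmem h
    exact huu rfl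
  · obtain rfl | hv := List.mem_cons.1 hv
    · exact absurd hvB hu
    · obtain ⟨_, hv⟩ := hmem hv
      exact congrArg Subtype.val (hW.eq_end i _ hv hvB)
  · refine (List.mem_cons.1 hvi).elim id fun hvi => (List.mem_cons.1 hvj).elim id fun hvj => ?_
    obtain ⟨_, hvi⟩ := hmem hvi
    obtain ⟨_, hvj⟩ := hmem hvj
    exact absurd hvj (hW.disjoint i j hij hvi)

end Fan

section KConnected

variable {α : Type*} [Fintype α] {G : SimpleGraph α} {k : ℕ} {u : α}

theorem KConnected.exists_isPath_avoiding (hG : KConnected k G) {S : Finset α} (hS : S.card < k)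
    {v w : α} (hv : v ∉ S) (hw : w ∉ S) :
    ∃ W : G.Walk v w, W.IsPath ∧ ∀ x ∈ W.support, x ∉ S := by
  obtain ⟨W, hW⟩ := (hG.2 S hS).exists_isPath ⟨v, by simpa using hv⟩ ⟨w, by simpa using hw⟩
  refine ⟨W.map (Embedding.induce _).toHom,
    hW.map Subtype.val_injective, fun x hx => ?_⟩
  obtain ⟨x, -, rfl⟩ := List.mem_map.1 (Walk.support_map _ W ▸ hx)
  exact x.2

theorem KConnected.le_card_of_separates (hG : KConnected k G) {B : Finset α} (hB : k ≤ B.card)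
    (hu : u ∉ B) {S : Finset ({u}ᶜ : Set α)}
    (hS : Separates (G.induce {u}ᶜ) {v | G.Adj u v} (Subtype.val ⁻¹' B) S) : k ≤ S.card := by
  by_contra! hSk
  set T := S.map (Function.Embedding.subtype _) with hT
  have hTk : T.card < k := by rwa [Finset.card_map]
  have huT : u ∉ T := by simp [hT]
  obtain ⟨b, hb, hbT⟩ := Finset.exists_mem_notMem_of_card_lt_card (hTk.trans_le hB)
  obtain ⟨W, hW, hWT⟩ := hG.exists_isPath_avoiding hTk huT hbT
  cases W with
  | nil => exact hu hb
  | cons huv W =>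
    have hWu : ∀ x ∈ W.support, x ∈ ({u}ᶜ : Set α) := fun x hx hxu =>
      ((Walk.cons_isPath_iff huv W).1 hW).2 (hxu ▸ hx)
    obtain ⟨x, hxW, hxS⟩ := hS (W.induce _ hWu) huv hb
    have hxT : (x : α) ∈ T := Finset.mem_map_of_mem _ hxS
    simp only [Walk.support_induce, List.mem_attachWith] at hxW
    exact hWT x (List.mem_cons_of_mem _ hxW) hxT

theorem KConnected.exists_isFan (hG : KConnected k G) {B : Finset α} (hB : k ≤ B.card)
    (hu : u ∉ B) : ∃ (t : Fin k → α) (W : ∀ i, G.Walk u (t i)), IsFan u (B : Set α) W := by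
  classical
  obtain ⟨a, b, W, hW⟩ := exists_isLinkage_of_forall_separates (ι := Fin k)
    fun S hS => by simpa using hG.le_card_of_separates hB hu hS
  exact ⟨_, exists_isFan_of_isLinkage hu hW⟩

end KConnected

section LongestPath

variable {α ι : Type*} {G : SimpleGraph α} {a b u v x y : α} {m n : ℕ} {P : G.Walk a b}

/-- `C` is a path whose interior avoids `P`: rerouting `P` along `C` yields another path. -/
structure IsEar (P : G.Walk a b) (C : G.Walk x y) : Prop where
  isPath : C.IsPath
  eq_or_eq : ∀ v ∈ C.support, v ∈ P.support → v = x ∨ v = y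

theorem IsFan.isEar {t : ι → α} {W : ∀ i, G.Walk u (t i)}
    (hW : IsFan u {v | v ∈ P.support} W) {i j : ι} (hij : i ≠ j) :
    IsEar P ((W i).reverse.append (W j)) where
  isPath := isPath_append (hW.isPath i).reverse (hW.isPath j) <| by
    simpa using hW.eq_start i j hij
  eq_or_eq v hv hvP := by
    rw [Walk.mem_support_append_iff, Walk.support_reverse, List.mem_reverse] at hv
    exact hv.imp (hW.eq_end i v · hvP) (hW.eq_end j v · hvP)

theorem IsFan.injective {B : Set α} {t : ι → α} {W : ∀ i, G.Walk u (t i)} (hW : IsFan u B W)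
    (hu : u ∉ B) : Function.Injective t := fun i j hij => by
  by_contra hne
  have htu : t i = u :=
    hW.eq_start i j hne _ (W i).end_mem_support (by rw [hij]; exact (W j).end_mem_support)
  exact hu (htu ▸ hW.end_mem i)

theorem IsLongestPath.reverse (hP : IsLongestPath G P) : IsLongestPath G P.reverse :=
  ⟨hP.1.reverse, by simpa using hP.2⟩

theorem IsLongestPath.mem_support_of_adj (hP : IsLongestPath G P) (hav : G.Adj a v) :
    v ∈ P.support := by
  by_contra hv
  have := hP.2 _ _ (.cons hav.symm P) (hP.1.cons hv)
  simp at this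

theorem IsEar.add_length_le (hP : IsLongestPath G P) {C : G.Walk x y} (hC : IsEar P C)
    (hx : P.getVert m = x) (hy : P.getVert n = y) (hmn : m < n) (hn : n ≤ P.length) :
    m + C.length ≤ n := by
  subst hx hy
  have htake : ∀ v ∈ (P.take m).support, v ∈ P.support := (P.isSubwalk_take m).support_subset
  have hdrop : ∀ v ∈ (P.drop n).support, v ∈ P.support := (P.isSubwalk_drop n).support_subset
  have hdisj : (P.take m).support.Disjoint (P.drop n).support := by
    rw [Walk.support_take, Walk.drop_support_eq_support_drop_min, min_eq_left hn]
    exact List.disjoint_take_drop hP.1.support_nodup hmn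
  have hpath : ((P.take m).append (C.append (P.drop n))).IsPath := by
    refine isPath_append (hP.1.take m) (isPath_append hC.isPath (hP.1.drop n) ?_) ?_
    · exact fun v hvC hv => (hC.eq_or_eq v hvC (hdrop v hv)).resolve_left
        (by rintro rfl; exact hdisj (Walk.end_mem_support _) hv)
    · intro v hv hvC
      rw [Walk.mem_support_append_iff] at hvC
      refine (hC.eq_or_eq v (hvC.resolve_right (hdisj hv)) (htake v hv)).resolve_right ?_
      rintro rfl
      exact hdisj hv (Walk.start_mem_support _)
  have := hP.2 _ _ _ hpath
  simp only [Walk.length_append, Walk.take_length, Walk.drop_length] at this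
  omega

theorem IsEar.add_length_le_succ (hP : IsLongestPath G P) {C : G.Walk x y} (hC : IsEar P C)
    (hxy : x ≠ y) (hx : P.getVert m = x) (hm : m ≤ P.length) : m + C.length ≤ P.length + 1 := by
  subst hx
  have hnil : ¬C.Nil := fun h => hxy h.eq
  have hpath : ((P.take m).append C.dropLast).IsPath := by
    refine isPath_append (hP.1.take m) hC.isPath.dropLast fun v hv hvC => ?_
    have hvy : v ≠ y := by
      rintro rfl
      have := hC.isPath.support_nodup
      rw [← Walk.support_dropLast_concat hnil] at this
      grind
    exact (hC.eq_or_eq v (by grind [Walk.support_dropLast_concat])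
      ((P.isSubwalk_take m).support_subset hv)).resolve_right hvy
  have := hP.2 _ _ _ hpath
  simp only [Walk.length_append, Walk.take_length, Walk.length_dropLast] at this
  omega

theorem IsEar.length_le_succ (hP : IsLongestPath G P) {C : G.Walk x y} (hC : IsEar P C)
    (hxy : x ≠ y) (hx : P.getVert m = x) (hm : m ≤ P.length) : C.length ≤ m + 1 := by
  have hC' : IsEar P.reverse C := ⟨hC.isPath, by simpa using hC.eq_or_eq⟩
  have := hC'.add_length_le_succ hP.reverse hxy (m := P.length - m)
    (by rw [Walk.getVert_reverse, Nat.sub_sub_self hm, hx]) (by simp)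
  rw [Walk.length_reverse] at this
  omega

theorem add_card_mul_le_of_separated [Fintype ι] [Nonempty ι] {f : ι → ℕ} {d lo hi : ℕ}
    (hlo : ∀ i, lo ≤ f i) (hhi : ∀ i, f i ≤ hi)
    (hsep : ∀ i j, i ≠ j → f i ≤ f j → f i + d ≤ f j) :
    lo + Fintype.card ι * d ≤ hi + d := by
  have hinj : Set.InjOn (fun q : ι × ℕ => f q.1 + q.2)
      ↑(Finset.univ (α := ι) ×ˢ Finset.range d) := by
    rintro ⟨i, r⟩ hr ⟨j, s⟩ hs h
    simp only [Finset.coe_product, Set.mem_prod, Finset.mem_coe, Finset.mem_range] at hr hs h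
    obtain rfl : i = j := by
      by_contra hij
      have := hsep i j hij
      have := hsep j i (Ne.symm hij)
      omega
    simpa using h
  have hmaps : Set.MapsTo (fun q : ι × ℕ => f q.1 + q.2)
      ↑(Finset.univ (α := ι) ×ˢ Finset.range d) ↑(Finset.Ico lo (hi + d)) := by
    rintro ⟨i, r⟩ hr
    have := hlo i
    have := hhi i
    simp only [Finset.coe_product, Set.mem_prod, Finset.mem_coe, Finset.mem_range,
      Finset.mem_Ico] at hr ⊢
    omega
  have hcard := Finset.card_le_card_of_injOn _ hmaps hinj
  have ⟨i⟩ := ‹Nonempty ι›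
  have := (hlo i).trans (hhi i)
  rw [Finset.card_product, Finset.card_univ, Finset.card_range, Nat.card_Ico] at hcard
  omega

theorem IsFan.two_mul_mul_card_add_one_le [Fintype ι] [Nontrivial ι] (hP : IsLongestPath G P)
    {t : ι → α} {W : ∀ i, G.Walk u (t i)} (hW : IsFan u {v | v ∈ P.support} W)
    (hu : u ∉ P.support) {e : ℕ} (he : ∀ i, e ≤ (W i).length) :
    2 * e * (Fintype.card ι + 1) ≤ P.length + 2 := by
  have hlen : ∀ i j, 2 * e ≤ ((W i).reverse.append (W j)).length := fun i j => by
    rw [Walk.length_append, Walk.length_reverse]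
    linarith [he i, he j]
  choose n hn hnP using fun i => (Walk.mem_support_iff_exists_getVert).1 (hW.end_mem i)
  have hgap : ∀ i j, i ≠ j → n i ≤ n j → n i + 2 * e ≤ n j := fun i j hij hle => by
    have hne : n i ≠ n j := fun h => hij (hW.injective hu (by rw [← hn i, ← hn j, h]))
    have := (hW.isEar hij).add_length_le hP (hn i) (hn j) (hle.lt_of_ne hne) (hnP j)
    linarith [hlen i j]
  have hlo : ∀ i, 2 * e ≤ n i + 1 := fun i => by
    obtain ⟨j, hj⟩ := exists_ne i
    exact (hlen i j).trans
      ((hW.isEar hj.symm).length_le_succ hP ((hW.injective hu).ne hj.symm) (hn i) (hnP i))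
  have hhi : ∀ i, n i + 2 * e ≤ P.length + 1 := fun i => by
    obtain ⟨j, hj⟩ := exists_ne i
    exact (Nat.add_le_add_left (hlen i j) _).trans
      ((hW.isEar hj.symm).add_length_le_succ hP ((hW.injective hu).ne hj.symm) (hn i) (hnP i))
  have := add_card_mul_le_of_separated (lo := 2 * e) (d := 2 * e) (hi := P.length + 2 - 2 * e)
    (f := fun i => n i + 1) hlo (fun i => by have := hhi i; omega)
    (fun i j hij hle => by have := hgap i j hij (Nat.le_of_succ_le_succ hle); omega)
  have ⟨i⟩ := (inferInstance : Nonempty ι)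
  have := hhi i
  rw [mul_add, mul_comm (2 * e)]
  omega

theorem KConnected.le_card_support_of_isLongestPath [Fintype α] [DecidableEq α] {k : ℕ}
    (hG : KConnected k G) (hP : IsLongestPath G P) (hu : u ∉ P.support) :
    k ≤ P.support.toFinset.card := by
  by_contra! hk
  obtain ⟨W, -, hW⟩ := hG.exists_isPath_avoiding (v := a) (w := u)
    ((P.support.toFinset.card_erase_le (a := a)).trans_lt hk) (by simp) (by simp [hu])
  cases W with
  | nil => exact hu P.start_mem_support
  | @cons _ v _ hav W =>
    refine hW v (by simp) ?_
    simpa [hav.ne'] using hP.mem_support_of_adj hav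

theorem exists_forall_eccW_le_dist [Fintype α] [DecidableEq α] (P : G.Walk a b) :
    ∃ u, ∀ v ∈ P.support, eccW G P ≤ G.dist u v := by
  obtain ⟨u, -, hu⟩ := Finset.exists_mem_eq_sup Finset.univ ⟨a, Finset.mem_univ a⟩ (walkDist G P)
  refine ⟨u, fun v hv => ?_⟩
  rw [eccW, hu]
  exact Finset.inf'_le _ (List.mem_toFinset.2 hv)

theorem KConnected.two_mul_eccW_mul_le [Fintype α] [DecidableEq α] {k : ℕ} (hk : 2 ≤ k)
    (hG : KConnected k G) (hP : IsLongestPath G P) : 2 * eccW G P * (k + 1) ≤ P.length + 2 := by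
  obtain ⟨u, hu⟩ := exists_forall_eccW_le_dist P
  by_cases huP : u ∈ P.support
  · have : eccW G P = 0 := by simpa using hu u huP
    simp [this]
  obtain ⟨t, W, hW⟩ := hG.exists_isFan (hG.le_card_support_of_isLongestPath hP huP)
    (by simpa using huP)
  rw [List.coe_toFinset] at hW
  have : Nontrivial (Fin k) := Fin.nontrivial_iff_two_le.2 hk
  simpa using hW.two_mul_mul_card_add_one_le hP huP
    fun i => (hu (t i) (hW.end_mem i)).trans (dist_le (W i))

end LongestPath

theorem stmt4 (G : SimpleGraph V) (k : ℕ) (hk : 2 ≤ k) (hG : KConnected k G)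
    {a b : V} (P : G.Walk a b) (hP : IsLongestPath G P) :
    (eccW G P : ℝ) ≤ ((P.length : ℝ) + 2) / (2 * k + 2) := by
  have h : ((2 * eccW G P * (k + 1) : ℕ) : ℝ) ≤ ((P.length + 2 : ℕ) : ℝ) :=
    Nat.cast_le.2 (hG.two_mul_eccW_mul_le hk hP)
  push_cast at h
  rw [le_div_iff₀ (by positivity)]
  linarith
end

section
/- Let G be a connected bipartite permutation graph without a Hamiltonian path. Then every longest path of G is a dominating path, and hence every longest path is a central path. -/
open SimpleGraph

variable {V : Type*} [Fintype V] [DecidableEq V]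

/-- `G` is a permutation graph: there are two linear orders (realized by injections
into `ℝ`) such that distinct vertices are adjacent iff the two orders disagree on them. -/
def IsPermutationGraph {W : Type*} (G : SimpleGraph W) : Prop :=
  ∃ f g : W → ℝ, Function.Injective f ∧ Function.Injective g ∧
    ∀ u v : W, G.Adj u v ↔ u ≠ v ∧
      ((f u < f v ∧ g v < g u) ∨ (f v < f u ∧ g u < g v))

/-!
Fix a bipartition of `G` and the order of one line of its permutation model. Then `x` and `y` are
adjacent as soon as they lie, each within its own class, between the endpoints of two crossing
edges. By induction, deleting the last vertex of each class and splicing the rest, the vertices of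
every path can be rearranged into a path that starts with the last vertices of the two classes.

Now suppose that a longest path `P` misses an edge `uw`. By connectedness we may assume that `w` is
adjacent to a vertex of `P`, and, up to reversing the order, that this vertex lies before `u`. If
some vertex of `P` lay after `uw`, two consecutive vertices of `P` would lie on different sides of
`uw`, and the edge could be inserted between them. So `P` lies before `uw`, and prepending `u, w` to
its rearrangement, at the cost of at most one vertex, gives a longer path. Hence every longest path
meets every edge, which makes it dominating. It is also central: a path of eccentricity zero is
Hamiltonian, and if there is one, then `P` is Hamiltonian too.
-/

theorem eq_of_ne_of_ne {a b c : Bool} (hab : a ≠ b) (hbc : b ≠ c) : a = c := by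
  decide +revert

section Lists

variable {W : Type*} {G : SimpleGraph W}

theorem splice_perm (p q : W) (L M R : List W) :
    (p :: q :: (L ++ (M.reverse ++ R))).Perm (L ++ p :: (M ++ q :: R)) := by
  classical
  grind

theorem forall_mem_of_consecutive_iff {l : List W} {K : W → Prop}
    (hK : ∀ ⦃x y A B⦄, l = A ++ x :: y :: B → (K x ↔ K y)) {p : W} (hp : p ∈ l) (hKp : K p) :
    ∀ v ∈ l, K v := by
  let R : W → W → Prop := fun x y ↦ K x ↔ K y
  have : Trans R R R := ⟨Iff.trans⟩
  have : Std.Symm R := ⟨fun _ _ ↦ Iff.symm⟩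
  have hR : l.Pairwise R := (List.isChain_iff_forall_rel_of_append_cons_cons.2 hK).pairwise
  exact fun v hv ↦ (List.Pairwise.forall_of_forall (R := R) (fun _ _ ↦ Iff.rfl) hR hp hv).1 hKp

theorem isChain_adj_reverse {l : List W} (hch : l.IsChain G.Adj) : l.reverse.IsChain G.Adj :=
  List.isChain_reverse.2 (hch.imp fun _ _ ↦ Adj.symm)

theorem exists_adj_of_isChain_append_cons {A B : List W} {v : W}
    (hch : (A ++ v :: B).IsChain G.Adj) (hne : A ++ B ≠ []) : ∃ x ∈ A ++ B, G.Adj v x := by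
  rcases B with _ | ⟨x, B⟩
  · obtain ⟨A, x, rfl⟩ := A.eq_nil_or_concat.resolve_left (by simpa using hne)
    exact ⟨x, by simp, ((List.isChain_append.1 hch).2.2 x (by simp) v (by simp)).symm⟩
  · exact ⟨x, by simp, (List.isChain_append_cons_cons.1 hch).2.1⟩

theorem exists_adj_of_isChain {l : List W} (hch : l.IsChain G.Adj) (hlen : 2 ≤ l.length) {v : W}
    (hv : v ∈ l) : ∃ x ∈ l, G.Adj v x := by
  obtain ⟨A, B, rfl⟩ := List.append_of_mem hv
  have hne : A ++ B ≠ [] := by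
    rw [← List.length_pos_iff]
    grind
  obtain ⟨x, hx, hvx⟩ := exists_adj_of_isChain_append_cons hch hne
  exact ⟨x, by grind, hvx⟩

theorem isChain_splice {p q : W} {L M R : List W} (hch : (L ++ p :: (M ++ q :: R)).IsChain G.Adj)
    (hadj : ∀ x ∈ L ++ M, ∀ y ∈ M ++ R, G.Adj x p → G.Adj y q → G.Adj x y) :
    (L ++ (M.reverse ++ R)).IsChain G.Adj := by
  simp only [List.isChain_append, List.isChain_cons] at hch ⊢
  obtain ⟨hL, ⟨hpM, hM, ⟨hqR, hR⟩, hMq⟩, hLp⟩ := hch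
  refine ⟨hL, ⟨isChain_adj_reverse hM, hR, fun x hx y hy ↦ ?_⟩, fun x hx y hy ↦ ?_⟩
  · have hxM : x ∈ M.head? := by simpa using hx
    exact hadj x (by grind) y (by grind) (hpM x (by grind)).symm (hqR y hy).symm
  · have hxp : G.Adj x p := hLp x hx p (by simp)
    have hxL : x ∈ L := List.mem_of_getLast? hx
    rcases M.eq_nil_or_concat with rfl | ⟨M, m, rfl⟩
    · exact hadj x (by grind) y (by grind) hxp (hqR y (by simpa using hy)).symm
    · obtain rfl : m = y := by simpa using hy
      exact hadj x (by grind) m (by grind) hxp (hMq m (by simp) q (by simp))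

end Lists

/-- A *strong ordering* of a two-coloured graph: `a` and `b` are adjacent as soon as they lie, each
within its own class, between the endpoints of two crossing edges `a₁ b₂` and `a₂ b₁`. For `a = a₁`
and `b = b₁` this is the usual uncrossing axiom, and for `a₁ = a = a₂` it says that neighbourhoods
are convex in their class. As there are only two colours, `C b ≠ C a` puts `b₁`, `b` and `b₂` in the
same class. -/
def IsStrongOrdering {W α : Type*} [LE α] {G : SimpleGraph W} (C : G.Coloring Bool)
    (r : W → α) : Prop :=
  ∀ ⦃a₁ a a₂ b₁ b b₂ : W⦄, C a₁ = C a → C a₂ = C a → C b ≠ C a →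
    r a₁ ≤ r a → r a ≤ r a₂ → r b₁ ≤ r b → r b ≤ r b₂ →
    G.Adj a₁ b₂ → G.Adj a₂ b₁ → G.Adj a b

/-- `p` lies weakly after every vertex of `l` of its own colour. A member of `l` with this property
is the last one of its class; `p` need not be a member, as when a path is to be extended by an edge
beyond it. -/
def IsColorUpperBound {W α : Type*} [LE α] {G : SimpleGraph W} (C : G.Coloring Bool) (r : W → α)
    (l : List W) (p : W) : Prop :=
  ∀ ⦃v⦄, v ∈ l → C v = C p → r v ≤ r p

theorem IsColorUpperBound.mono {W α : Type*} [LE α] {G : SimpleGraph W} {C : G.Coloring Bool}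
    {r : W → α} {l l' : List W} {p : W} (hp : IsColorUpperBound C r l p) (hl : l' ⊆ l) :
    IsColorUpperBound C r l' p :=
  fun _ hv ↦ hp (hl hv)

theorem exists_isColorUpperBound {W α : Type*} [LinearOrder α] {G : SimpleGraph W}
    (C : G.Coloring Bool) (r : W → α) {l : List W} {w : W} (hw : w ∈ l) :
    ∃ p ∈ l, C p = C w ∧ IsColorUpperBound C r l p := by
  classical
  obtain ⟨p, hp, hmax⟩ := (l.toFinset.filter (C · = C w)).exists_max_image r ⟨w, by simp [hw]⟩
  simp only [Finset.mem_filter, List.mem_toFinset] at hp hmax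
  exact ⟨p, hp.1, hp.2, fun v hv hc ↦ hmax v ⟨hv, hc.trans hp.2⟩⟩

/-- The first two vertices of `l` are the last ones of their classes among the vertices of `l`: the
normal form into which paths are rearranged. If `l` has fewer than two vertices, this is only asked
of those that exist. -/
def StartsWithMaxima {W α : Type*} [LE α] {G : SimpleGraph W} (C : G.Coloring Bool) (r : W → α)
    (l : List W) : Prop :=
  ∀ p ∈ l.take 2, IsColorUpperBound C r l p

theorem startsWithMaxima_of_length_le_one {W α : Type*} [Preorder α] {G : SimpleGraph W}
    {C : G.Coloring Bool} {r : W → α} {l : List W} (hl : l.length ≤ 1) :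
    StartsWithMaxima C r l := by
  match l with
  | [] | [_] => simp [StartsWithMaxima, IsColorUpperBound]

namespace IsStrongOrdering

variable {W α : Type*} {G : SimpleGraph W} {C : G.Coloring Bool} {r : W → α}

theorem toDual [LE α] (h : IsStrongOrdering C r) : IsStrongOrdering C (OrderDual.toDual ∘ r) :=
  fun _ _ _ _ _ _ ha₁ ha₂ hb h₁ h₂ h₃ h₄ hadj₁ hadj₂ ↦ h ha₂ ha₁ hb h₂ h₁ h₄ h₃ hadj₂ hadj₁

section Preorder

variable [Preorder α]

theorem uncross (h : IsStrongOrdering C r) {a a' b b' : W} (ha : C a = C a') (hra : r a ≤ r a')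
    (hrb : r b ≤ r b') (h₁ : G.Adj a b') (h₂ : G.Adj a' b) : G.Adj a b ∧ G.Adj a' b' := by
  have hb : C b ≠ C a := ha ▸ (C.valid h₂).symm
  have hb' : C b' ≠ C a' := ha ▸ (C.valid h₁).symm
  exact ⟨h rfl ha.symm hb le_rfl hra le_rfl hrb h₁ h₂, h ha rfl hb' hra le_rfl hrb le_rfl h₁ h₂⟩

theorem adj_of_le_of_le (h : IsStrongOrdering C r) {a b₁ b b₂ : W} (h₁ : G.Adj a b₁)
    (h₂ : G.Adj a b₂) (hb : C b = C b₂) (hb₁ : r b₁ ≤ r b) (hb₂ : r b ≤ r b₂) : G.Adj a b :=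
  h rfl rfl (hb ▸ (C.valid h₂).symm) le_rfl le_rfl hb₁ hb₂ h₂ h₁

theorem adj_and_adj_of_isColorUpperBound (h : IsStrongOrdering C r) {l : List W} {p q x y : W}
    (hpq : C p ≠ C q) (hp : IsColorUpperBound C r l p) (hq : IsColorUpperBound C r l q)
    (hx : x ∈ l) (hy : y ∈ l) (hxp : G.Adj x p) (hyq : G.Adj y q) : G.Adj x y ∧ G.Adj p q := by
  have hxq : C x = C q := eq_of_ne_of_ne (C.valid hxp) hpq
  have hyp : C y = C p := eq_of_ne_of_ne (C.valid hyq) hpq.symm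
  obtain ⟨hyx, hadj⟩ := h.uncross hyp (hp hy hyp) (hq hx hxq) hyq hxp.symm
  exact ⟨hyx.symm, hadj⟩

theorem startsWithMaxima_cons_cons (h : IsStrongOrdering C r) {l t : List W} {p q e x : W}
    (hpq : G.Adj p q) (hp : IsColorUpperBound C r l p) (hq : IsColorUpperBound C r l q)
    (hperm : (p :: q :: e :: t).Perm l) (hch : (e :: t).IsChain G.Adj)
    (he : IsColorUpperBound C r (e :: t) e) (hep : C e = C p) (hx : x ∈ e :: t)
    (hqx : G.Adj q x) :
    (p :: q :: e :: t).IsChain G.Adj ∧ StartsWithMaxima C r (p :: q :: e :: t) := by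
  have hxe : C x = C e := (eq_of_ne_of_ne (C.valid hqx.symm) (C.valid hpq.symm)).trans hep.symm
  have hqe : G.Adj q e :=
    h.adj_of_le_of_le hqx hpq.symm hep (he hx hxe) (hp (hperm.subset (by simp)) hep)
  refine ⟨.cons_cons hpq (.cons_cons hqe hch), fun v hv ↦ ?_⟩
  obtain rfl | rfl : v = p ∨ v = q := by simpa using hv
  · exact hp.mono hperm.subset
  · exact hq.mono hperm.subset

theorem exists_perm_startsWithMaxima_of_splice (h : IsStrongOrdering C r) {l t L M R : List W}
    {p q e : W} (hl : l = L ++ p :: (M ++ q :: R)) (hch : l.IsChain G.Adj) (hpq : G.Adj p q)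
    (hp : IsColorUpperBound C r l p) (hq : IsColorUpperBound C r l q)
    (hperm : (e :: t).Perm (L ++ (M.reverse ++ R))) (ht : (e :: t).IsChain G.Adj)
    (he : IsColorUpperBound C r (e :: t) e) (hep : C e = C p) :
    ∃ l' : List W, l'.Perm l ∧ l'.IsChain G.Adj ∧ StartsWithMaxima C r l' := by
  by_cases hMR : M ++ R = []
  · obtain ⟨rfl, rfl⟩ := List.append_eq_nil_iff.1 hMR
    refine ⟨l.reverse, l.reverse_perm, isChain_adj_reverse hch, fun v hv ↦ ?_⟩
    obtain rfl | rfl : v = q ∨ v = p := by simpa [hl] using hv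
    · exact hq.mono l.reverse_perm.subset
    · exact hp.mono l.reverse_perm.subset
  · have hperm' : (p :: q :: e :: t).Perm l :=
      hl ▸ ((hperm.cons q).cons p).trans (splice_perm p q L M R)
    have hchM : (M ++ q :: R).IsChain G.Adj := (List.isChain_append.1 (hl ▸ hch)).2.1.of_cons
    obtain ⟨x, hx, hqx⟩ := exists_adj_of_isChain_append_cons hchM hMR
    exact ⟨_, hperm', h.startsWithMaxima_cons_cons hpq hp hq hperm' ht he hep
      (hperm.symm.subset (by grind)) hqx⟩

end Preorder

variable [LinearOrder α]

theorem exists_split_maxima {l : List W} (hch : l.IsChain G.Adj) (hlen : 2 ≤ l.length) :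
    ∃ p q L M R, l = L ++ p :: (M ++ q :: R) ∧ C p ≠ C q ∧
      IsColorUpperBound C r l p ∧ IsColorUpperBound C r l q := by
  obtain ⟨v, hv⟩ := List.exists_mem_of_length_pos (Nat.zero_lt_of_lt hlen)
  obtain ⟨w, hw, hvw⟩ := exists_adj_of_isChain hch hlen hv
  obtain ⟨p, hpl, hpv, hp⟩ := exists_isColorUpperBound C r hv
  obtain ⟨q, hql, hqw, hq⟩ := exists_isColorUpperBound C r hw
  have hpq : C p ≠ C q := hpv ▸ hqw ▸ C.valid hvw
  obtain ⟨A, B, hl⟩ := List.append_of_mem hpl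
  have hqAB : q ∈ A ∨ q ∈ B := by
    have : q ≠ p := fun e ↦ hpq (e ▸ rfl)
    simpa [hl, this] using hql
  rcases hqAB with hqA | hqB
  · obtain ⟨A₁, A₂, rfl⟩ := List.append_of_mem hqA
    exact ⟨q, p, A₁, A₂, B, by simpa using hl, hpq.symm, hq, hp⟩
  · obtain ⟨B₁, B₂, rfl⟩ := List.append_of_mem hqB
    exact ⟨p, q, A, B₁, B₂, hl, hpq, hp, hq⟩

theorem exists_perm_startsWithMaxima (h : IsStrongOrdering C r) (l : List W)
    (hch : l.IsChain G.Adj) :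
    ∃ l' : List W, l'.Perm l ∧ l'.IsChain G.Adj ∧ StartsWithMaxima C r l' := by
  induction hn : l.length using Nat.strong_induction_on generalizing l with
  | _ n ih =>
  subst hn
  rcases Nat.lt_or_ge l.length 2 with hlt | hlen
  · exact ⟨l, .rfl, hch, startsWithMaxima_of_length_le_one (Nat.le_of_lt_succ hlt)⟩
  obtain ⟨p, q, L, M, R, hl, hc, hp, hq⟩ := exists_split_maxima (C := C) (r := r) hch hlen
  obtain ⟨x, hx, hpx⟩ := exists_adj_of_isChain hch hlen (v := p) (by simp [hl])
  obtain ⟨y, hy, hqy⟩ := exists_adj_of_isChain hch hlen (v := q) (by simp [hl])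
  have hpq : G.Adj p q :=
    (h.adj_and_adj_of_isColorUpperBound hc hp hq hx hy hpx.symm hqy.symm).2
  have hsplice : (L ++ (M.reverse ++ R)).IsChain G.Adj :=
    isChain_splice (hl ▸ hch) fun x hx y hy hxp hyq ↦
      (h.adj_and_adj_of_isColorUpperBound hc hp hq (by grind) (by grind) hxp hyq).1
  obtain ⟨l', hperm, hch', hl'⟩ := ih _ (by simp [hl]) _ hsplice rfl
  rcases l' with _ | ⟨e, t⟩
  · obtain ⟨rfl, rfl, rfl⟩ : L = [] ∧ M = [] ∧ R = [] := by simpa using hperm.symm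
    refine ⟨l, .rfl, hch, fun v hv ↦ ?_⟩
    obtain rfl | rfl : v = p ∨ v = q := by simpa [hl] using hv
    exacts [hp, hq]
  have he : IsColorUpperBound C r (e :: t) e := hl' e (by simp)
  by_cases hep : C e = C p
  · exact h.exists_perm_startsWithMaxima_of_splice hl hch hpq hp hq hperm hch' he hep
  · obtain ⟨l₁, hperm₁, hch₁, hl₁⟩ := h.exists_perm_startsWithMaxima_of_splice
      (l := l.reverse) (L := R.reverse) (M := M.reverse) (R := L.reverse) (by simp [hl])
      (isChain_adj_reverse hch) hpq.symm (hq.mono l.reverse_perm.subset)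
      (hp.mono l.reverse_perm.subset) (hperm.trans (by classical grind)) hch' he
      (eq_of_ne_of_ne hep hc)
    exact ⟨l₁, hperm₁.trans l.reverse_perm, hch₁, hl₁⟩

theorem exists_isChain_cons_cons (h : IsStrongOrdering C r) {l : List W} {u w p : W}
    (hch : l.IsChain G.Adj) (huw : G.Adj u w) (hu : IsColorUpperBound C r l u) (hp : p ∈ l)
    (hwp : G.Adj w p) :
    ∃ t : List W, t.Subperm l ∧ l.length ≤ t.length + 1 ∧ (u :: w :: t).IsChain G.Adj := by
  have hpu : C p = C u := eq_of_ne_of_ne (C.valid hwp.symm) (C.valid huw.symm)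
  obtain ⟨l', hperm, hch', hl'⟩ := h.exists_perm_startsWithMaxima l hch
  have hpl' : p ∈ l' := hperm.symm.subset hp
  have hadj : ∀ d ∈ l', IsColorUpperBound C r l' d → C d = C u → G.Adj w d := fun d hd hmax hdu ↦
    h.adj_of_le_of_le hwp huw.symm hdu (hmax hpl' (hpu.trans hdu.symm)) (hu (hperm.subset hd) hdu)
  rcases l' with _ | ⟨e, t⟩
  · simp at hpl'
  by_cases heu : C e = C u
  · have hwe : G.Adj w e := hadj e (by simp) (hl' e (by simp)) heu
    exact ⟨e :: t, hperm.subperm, by rw [hperm.length_eq]; omega,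
      .cons_cons huw (.cons_cons hwe hch')⟩
  rcases t with _ | ⟨d, t⟩
  · obtain rfl : p = e := by simpa using hpl'
    exact absurd hpu heu
  · have hdu : C d = C u := eq_of_ne_of_ne (C.valid (List.isChain_cons_cons.1 hch').1.symm) heu
    have hwd : G.Adj w d := hadj d (by simp) (hl' d (by simp)) hdu
    exact ⟨d :: t, (List.sublist_cons_self e _).subperm.trans hperm.subperm, hperm.length_eq.ge,
      .cons_cons huw (.cons_cons hwd hch'.of_cons)⟩

theorem isColorUpperBound_of_not_insertable (h : IsStrongOrdering C r) {l : List W} {u w p : W}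
    (hch : l.IsChain G.Adj) (huw : G.Adj u w) (hp : p ∈ l) (hpu : C p = C u) (hr : r p ≤ r u)
    (hins : ∀ ⦃x y A B⦄, l = A ++ x :: y :: B →
      ¬ (G.Adj x u ∧ G.Adj w y) ∧ ¬ (G.Adj x w ∧ G.Adj u y)) :
    IsColorUpperBound C r l u := by
  let K : W → Prop := fun v ↦ (C v = C u → r v ≤ r u) ∧ (C v = C w → r v ≤ r w)
  have hstep : ∀ ⦃x y⦄, G.Adj x y → ¬ (G.Adj x u ∧ G.Adj w y) → ¬ (G.Adj x w ∧ G.Adj u y) →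
      K x → K y := by
    refine fun x y hxy hxu hxw hx ↦ ⟨fun hyu ↦ ?_, fun hyw ↦ ?_⟩ <;> by_contra hlt
    · have hc : C x = C w := eq_of_ne_of_ne (C.valid hxy) (hyu ▸ C.valid huw)
      exact hxu (h.uncross hc (hx.2 hc) (le_of_not_ge hlt) hxy huw.symm)
    · have hc : C x = C u := eq_of_ne_of_ne (C.valid hxy) (hyw ▸ C.valid huw.symm)
      exact hxw (h.uncross hc (hx.1 hc) (le_of_not_ge hlt) hxy huw)
  have hKp : K p := ⟨fun _ ↦ hr, fun hpw ↦ absurd (hpu.symm.trans hpw) (C.valid huw)⟩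
  refine fun v hv ↦ (forall_mem_of_consecutive_iff (fun x y A B hl ↦ ?_) hp hKp v hv).1
  have hxy : G.Adj x y := (List.isChain_append_cons_cons.1 (hl ▸ hch)).2.1
  obtain ⟨hxu, hxw⟩ := hins hl
  refine ⟨hstep hxy hxu hxw, hstep hxy.symm (fun hy ↦ hxw ?_) (fun hy ↦ hxu ?_)⟩
  exacts [⟨hy.2.symm, hy.1.symm⟩, ⟨hy.2.symm, hy.1.symm⟩]

end IsStrongOrdering

theorem IsPermutationGraph.exists_isStrongOrdering {W : Type*} {G : SimpleGraph W}
    (hG : IsPermutationGraph G) (C : G.Coloring Bool) :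
    ∃ r : W → ℝ, IsStrongOrdering C r := by
  obtain ⟨f, g, hf, -, hadj⟩ := hG
  have hmono : ∀ {u v}, C u = C v → f u ≤ f v → g u ≤ g v := by
    intro u v hC hle
    by_contra! hlt
    have hne : u ≠ v := fun e ↦ hlt.ne (e ▸ rfl)
    exact C.valid ((hadj u v).2 ⟨hne, .inl ⟨hle.lt_of_ne (hf.ne hne), hlt⟩⟩) hC
  refine ⟨f, fun a₁ a a₂ b₁ b b₂ ha₁ ha₂ hb hfa₁ hfa₂ hfb₁ hfb₂ h₁ h₂ ↦ ?_⟩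
  have hb₁ : C b₁ = C b := eq_of_ne_of_ne (C.valid h₂.symm) (ha₂ ▸ hb.symm)
  have hb₂ : C b₂ = C b := eq_of_ne_of_ne (C.valid h₁.symm) (ha₁ ▸ hb.symm)
  have hga₁ := hmono ha₁ hfa₁
  have hga₂ := hmono ha₂.symm hfa₂
  have hgb₁ := hmono hb₁ hfb₁
  have hgb₂ := hmono hb₂.symm hfb₂
  refine (hadj a b).2 ⟨fun e ↦ hb (e ▸ rfl), ?_⟩
  rcases ((hadj _ _).1 h₁).2 with h₁ | h₁ <;> rcases ((hadj _ _).1 h₂).2 with h₂ | h₂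
  · exact .inl ⟨by linarith, by linarith⟩
  · linarith
  · linarith
  · exact .inr ⟨by linarith, by linarith⟩

namespace IsLongestPath

variable {W : Type*} {G : SimpleGraph W} {a b : W} {P : G.Walk a b}

theorem length_le_of_isChain (hP : IsLongestPath G P) {l : List W} (hch : l.IsChain G.Adj)
    (hnd : l.Nodup) : l.length ≤ P.support.length := by
  rcases eq_or_ne l [] with rfl | hne
  · simp
  have hQ : (Walk.ofSupport l hne hch).IsPath := by
    rwa [Walk.isPath_def, Walk.support_ofSupport]
  have hle := hP.2 _ _ _ hQ
  rw [← Walk.support_ofSupport hne hch, Walk.length_support, Walk.length_support]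
  omega

theorem not_adj_and_adj (hP : IsLongestPath G P) {u w x y : W} {A B : List W} (huw : G.Adj u w)
    (hu : u ∉ P.support) (hw : w ∉ P.support) (hl : P.support = A ++ x :: y :: B) :
    ¬ (G.Adj x u ∧ G.Adj w y) := by
  rintro ⟨hxu, hwy⟩
  have hch := P.isChain_adj_support
  have hnd := hP.1.support_nodup
  have hne := huw.ne
  rw [hl] at hch hnd hu hw
  have hch' : (A ++ x :: u :: w :: y :: B).IsChain G.Adj := by
    simp only [List.isChain_append_cons_cons, List.isChain_cons_cons] at hch ⊢
    exact ⟨hch.1, hxu, huw, hwy, hch.2.2⟩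
  have hle := hP.length_le_of_isChain hch' (by classical grind)
  simp [hl] at hle

theorem lt_of_adj_of_notMem {α : Type*} [LinearOrder α] {C : G.Coloring Bool} {r : W → α}
    (hP : IsLongestPath G P) (h : IsStrongOrdering C r) {u w p : W} (huw : G.Adj u w)
    (hu : u ∉ P.support) (hw : w ∉ P.support) (hp : p ∈ P.support) (hwp : G.Adj w p) :
    r u < r p := by
  by_contra! hr
  have hpu : C p = C u := eq_of_ne_of_ne (C.valid hwp.symm) (C.valid huw.symm)
  have hub : IsColorUpperBound C r P.support u :=
    h.isColorUpperBound_of_not_insertable P.isChain_adj_support huw hp hpu hr fun x y A B hl ↦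
      ⟨hP.not_adj_and_adj huw hu hw hl, hP.not_adj_and_adj huw.symm hw hu hl⟩
  obtain ⟨t, ⟨s, hst, hs⟩, hlen, hch⟩ :=
    h.exists_isChain_cons_cons P.isChain_adj_support huw hub hp hwp
  have ht : t ⊆ P.support := fun v hv ↦ hs.subset (hst.symm.subset hv)
  have hnd : (u :: w :: t).Nodup := by
    simp only [List.nodup_cons, List.mem_cons, not_or]
    exact ⟨⟨huw.ne, fun hut ↦ hu (ht hut)⟩, fun hwt ↦ hw (ht hwt),
      hst.nodup_iff.1 (hP.1.support_nodup.sublist hs)⟩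
  have hle := hP.length_le_of_isChain hch hnd
  simp only [List.length_cons] at hle
  omega

theorem mem_support_or_mem_support_of_adj {α : Type*} [LinearOrder α] {C : G.Coloring Bool}
    {r : W → α} (hP : IsLongestPath G P) (h : IsStrongOrdering C r) (hG : G.Preconnected)
    {u w : W} (huw : G.Adj u w) : u ∈ P.support ∨ w ∈ P.support := by
  by_contra! hmem
  obtain ⟨Q⟩ := hG u a
  obtain ⟨⟨⟨v, p⟩, hvp⟩, -, ⟨hv, x, hx, hvx⟩, hp⟩ := Q.exists_boundary_dart
    {v | v ∉ P.support ∧ ∃ x ∉ P.support, G.Adj v x} ⟨hmem.1, w, hmem.2, huw⟩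
    fun ha ↦ ha.1 P.start_mem_support
  have hpP : p ∈ P.support := by
    by_contra hpP
    exact hp ⟨hpP, v, hv, hvp.symm⟩
  exact lt_asymm (hP.lt_of_adj_of_notMem h hvx.symm hx hv hpP hvp)
    (hP.lt_of_adj_of_notMem h.toDual hvx.symm hx hv hpP hvp)

theorem exists_mem_support_dist_le_one {α : Type*} [LinearOrder α] {C : G.Coloring Bool}
    {r : W → α} (hP : IsLongestPath G P) (h : IsStrongOrdering C r) (hG : G.Preconnected)
    (v : W) : ∃ x ∈ P.support, G.dist v x ≤ 1 := by
  by_cases hv : v ∈ P.support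
  · exact ⟨v, hv, by simp⟩
  · have : Nontrivial W := ⟨v, a, fun e ↦ hv (e ▸ P.start_mem_support)⟩
    obtain ⟨x, hvx⟩ := hG.exists_adj_of_nontrivial v
    exact ⟨x, (hP.mem_support_or_mem_support_of_adj h hG hvx).resolve_left hv,
      (dist_eq_one_iff_adj.2 hvx).le⟩

theorem isHamiltonian [Finite W] [DecidableEq W] (hP : IsLongestPath G P) {c d : W}
    {Q : G.Walk c d} (hQ : Q.IsHamiltonian) : P.IsHamiltonian := by
  have := Fintype.ofFinite W
  have hcard : Fintype.card W ≤ P.support.toFinset.card := by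
    rw [List.toFinset_card_of_nodup hP.1.support_nodup, ← hQ.length_support]
    exact hP.length_le_of_isChain Q.isChain_adj_support hQ.isPath.support_nodup
  have huniv : P.support.toFinset = Finset.univ :=
    Finset.eq_univ_of_card _ (hcard.antisymm' (Finset.card_le_univ _))
  exact hP.1.isHamiltonian_iff.2 fun v ↦ List.mem_toFinset.1 (huniv ▸ Finset.mem_univ v)

end IsLongestPath

section Eccentricity

variable {W : Type*} [DecidableEq W] {G : SimpleGraph W} {a b : W} {P : G.Walk a b}

theorem walkDist_le_iff {n : ℕ} {u : W} :
    walkDist G P u ≤ n ↔ ∃ x ∈ P.support, G.dist u x ≤ n :=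
  (Finset.inf'_le_iff _).trans (by simp only [List.mem_toFinset])

theorem walkDist_eq_zero_iff (hG : G.Connected) {u : W} :
    walkDist G P u = 0 ↔ u ∈ P.support := by
  rw [← Nat.le_zero, walkDist_le_iff]
  simp [hG.dist_eq_zero_iff]

theorem eccW_le_iff [Fintype W] {n : ℕ} : eccW G P ≤ n ↔ ∀ u, walkDist G P u ≤ n := by
  simp [eccW]

theorem eccW_eq_zero_iff [Fintype W] (hG : G.Connected) (hP : P.IsPath) :
    eccW G P = 0 ↔ P.IsHamiltonian := by
  rw [← Nat.le_zero, eccW_le_iff, hP.isHamiltonian_iff]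
  simp only [Nat.le_zero, walkDist_eq_zero_iff hG]

theorem eccW_eq_pe_of_forall_le [Fintype W] (hP : P.IsPath)
    (hmin : ∀ (c d : W) (Q : G.Walk c d), Q.IsPath → eccW G P ≤ eccW G Q) :
    eccW G P = pe G := by
  refine le_antisymm (le_csInf ⟨_, a, b, P, hP, rfl⟩ ?_) (Nat.sInf_le ⟨a, b, P, hP, rfl⟩)
  rintro _ ⟨c, d, Q, hQ, rfl⟩
  exact hmin c d Q hQ

theorem IsLongestPath.eccW_eq_pe [Fintype W] (hP : IsLongestPath G P) (hG : G.Connected)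
    (hdom : eccW G P ≤ 1) : eccW G P = pe G := by
  refine eccW_eq_pe_of_forall_le hP.1 fun c d Q hQ ↦ ?_
  rcases Nat.eq_zero_or_pos (eccW G Q) with hzero | hpos
  · have hham := hP.isHamiltonian ((eccW_eq_zero_iff hG hQ).1 hzero)
    exact ((eccW_eq_zero_iff hG hP.1).2 hham).trans_le (Nat.zero_le _)
  · exact hdom.trans hpos

end Eccentricity

theorem stmt14_general (G : SimpleGraph V) (hG : G.Connected)
    (hbip : G.Colorable 2) (hperm : IsPermutationGraph G) :
    ∀ (a b : V) (P : G.Walk a b), IsLongestPath G P →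
      (∀ u : V, walkDist G P u ≤ 1) ∧ eccW G P = pe G := by
  intro a b P hP
  obtain ⟨r, h⟩ := hperm.exists_isStrongOrdering (hbip.toColoring Fintype.card_bool.ge)
  have hdom (u : V) : walkDist G P u ≤ 1 :=
    walkDist_le_iff.2 (hP.exists_mem_support_dist_le_one h hG.preconnected u)
  exact ⟨hdom, hP.eccW_eq_pe hG (eccW_le_iff.2 hdom)⟩

theorem stmt14 (G : SimpleGraph V) (hG : G.Connected)
    (hbip : G.Colorable 2) (hperm : IsPermutationGraph G)
    (hnoham : ¬ ∃ (a b : V) (P : G.Walk a b), P.IsPath ∧ P.IsHamiltonian) :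
    ∀ (a b : V) (P : G.Walk a b), IsLongestPath G P →
      (∀ u : V, walkDist G P u ≤ 1) ∧ eccW G P = pe G :=
  stmt14_general G hG hbip hperm
end

section
/- Every connected biconvex bipartite graph has a dominating path; that is, if G is connected and biconvex then pe(G) ≤ 1. -/
open SimpleGraph

variable {V : Type*} [Fintype V] [DecidableEq V]

/-!
Let `x₁, x₂` and `y₁, y₂` be the first and last vertices of `X` and `Y`, and choose edges `a y₁`,
`b y₂`, `x₁ p`, `x₂ q`; after reversing the order of `Y` if necessary, `a` weakly precedes `b`.
Connectedness forces the edges `a p` and `b q`: were `a p` missing, the edges `x y` with `a ≤ x`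
and `p ≤ y` would form a union of components, and symmetrically for `b q`. Any path through `a p`
and `b q` dominates. Indeed `p` is adjacent to everything from `x₁` to `a` and `q` to everything
from `b` to `x₂`, while a vertex `x` strictly between `a` and `b` is adjacent to the vertex of `Y`
at which the part of the path joining `a` to `b` passes beyond `x`; the same holds in `Y`.
-/

section GraphLemmas

variable {W : Type*} {G : SimpleGraph W}

/-- `D` is a dominating set of `G`: every vertex lies in `D` or has a neighbour in `D`. A path is
dominating if the set of its vertices is. -/
def IsDominatingSet (G : SimpleGraph W) (D : Set W) : Prop :=
  ∀ u, ∃ v ∈ D, u = v ∨ G.Adj u v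

lemma exists_adj_mem_notMem (hG : G.Preconnected) {S : Set W} {a b : W} (ha : a ∈ S)
    (hb : b ∉ S) : ∃ v ∈ S, ∃ w ∉ S, G.Adj v w := by
  obtain ⟨P⟩ := hG a b
  obtain ⟨d, -, hfst, hsnd⟩ := P.exists_boundary_dart S ha hb
  exact ⟨d.fst, hfst, d.snd, hsnd, d.adj⟩

lemma exists_isPath_support_subset_of_adj {u v p : W} {P : G.Walk u v} (hP : P.IsPath)
    (hpu : G.Adj p u) :
    ∃ (s : W) (Q : G.Walk s v), Q.IsPath ∧ p ∈ Q.support ∧ P.support ⊆ Q.support := by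
  by_cases hp : p ∈ P.support
  · exact ⟨u, P, hP, hp, List.Subset.refl _⟩
  · exact ⟨p, P.cons hpu, hP.cons hp, Walk.start_mem_support _, List.subset_cons_self _ _⟩

lemma exists_isPath_through_edges (hG : G.Preconnected) {a p b q : W} (hap : G.Adj a p)
    (hbq : G.Adj b q) :
    ∃ (s t : W) (P : G.Walk s t), P.IsPath ∧
      a ∈ P.support ∧ p ∈ P.support ∧ b ∈ P.support ∧ q ∈ P.support := by
  obtain ⟨P, hP⟩ := hG.exists_isPath a b
  obtain ⟨s, Q, hQ, hpQ, hPQ⟩ := exists_isPath_support_subset_of_adj hP hap.symm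
  obtain ⟨t, R, hR, hqR, hQR⟩ := exists_isPath_support_subset_of_adj hQ.reverse hbq.symm
  rw [Walk.support_reverse, List.reverse_subset] at hQR
  exact ⟨t, s, R, hR, hQR (hPQ P.start_mem_support), hQR hpQ, hQR (hPQ P.end_mem_support), hqR⟩

lemma exists_adj_forall_le {α : Type*} [LinearOrder α] {X Y : Set W}
    (hG : G.IsBipartiteWith X Y) (hfin : X.Finite) (hne : X.Nonempty) (hX : X ⊆ G.support)
    (f : W → α) : ∃ p ∈ Y, ∃ x₁, G.Adj p x₁ ∧ ∀ x ∈ X, f x₁ ≤ f x := by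
  obtain ⟨x₁, hx₁, hmin⟩ := Set.exists_min_image X f hfin hne
  obtain ⟨p, hx₁p⟩ := hX hx₁
  exact ⟨p, hG.mem_of_mem_adj hx₁ hx₁p, x₁, hx₁p.symm, hmin⟩

end GraphLemmas

section Biconvex

variable {W α β : Type*} {G : SimpleGraph W} {X Y D : Set W} {f : W → α} {g : W → β}

/-- For a bipartite graph with sides `X` and `Y`: the neighbourhood of every vertex of `Y` is
consecutive in the ordering of `X` by `f`. Ties `f x = f x'` are allowed, and force `x` and
`x'` to have the same neighbours. -/
def NeighborsConsecutive [LE α] (G : SimpleGraph W) (X Y : Set W) (f : W → α) : Prop :=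
  ∀ y ∈ Y, ∀ x₁ ∈ X, ∀ x₂ ∈ X, ∀ x₃ ∈ X,
    G.Adj y x₁ → G.Adj y x₃ → f x₁ ≤ f x₂ → f x₂ ≤ f x₃ → G.Adj y x₂

/-- `G` is a biconvex bipartite graph with sides `X` and `Y`, as witnessed by the orderings of `X`
by `f` and of `Y` by `g`. -/
structure IsBiconvexWith [LE α] [LE β] (G : SimpleGraph W) (X Y : Set W) (f : W → α)
    (g : W → β) : Prop where
  isBipartiteWith : G.IsBipartiteWith X Y
  left : NeighborsConsecutive G X Y f
  right : NeighborsConsecutive G Y X g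

namespace NeighborsConsecutive

lemma dual [LE α] (h : NeighborsConsecutive G X Y f) :
    NeighborsConsecutive G X Y (OrderDual.toDual ∘ f) :=
  fun y hy x₁ hx₁ x₂ hx₂ x₃ hx₃ h₁ h₃ h₁₂ h₂₃ => h y hy x₃ hx₃ x₂ hx₂ x₁ hx₁ h₃ h₁ h₂₃ h₁₂

lemma adj [LE α] (h : NeighborsConsecutive G X Y f) (hG : G.IsBipartiteWith X Y)
    {x x₁ x₂ y : W} (hy : y ∈ Y) (hx : x ∈ X) (h₁ : G.Adj y x₁) (h₂ : G.Adj y x₂)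
    (hle₁ : f x₁ ≤ f x) (hle₂ : f x ≤ f x₂) : G.Adj y x :=
  h y hy x₁ (hG.symm.mem_of_mem_adj hy h₁) x hx x₂ (hG.symm.mem_of_mem_adj hy h₂) h₁ h₂ hle₁ hle₂

variable [LinearOrder α]

lemma exists_adj_of_le_of_lt (h : NeighborsConsecutive G X Y f) (hG : G.IsBipartiteWith X Y)
    (hD : (G.induce D).Preconnected) {a b x : W} (ha : a ∈ X) (haD : a ∈ D) (hb : b ∈ X)
    (hbD : b ∈ D) (hx : x ∈ X) (hax : f a ≤ f x) (hxb : f x < f b) : ∃ v ∈ D, G.Adj x v := by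
  let S : Set D := {v | ↑v ∈ X ∧ f v ≤ f x ∨ ↑v ∈ Y ∧ ∃ x', G.Adj v x' ∧ f x' ≤ f x}
  have haS : ⟨a, haD⟩ ∈ S := .inl ⟨ha, hax⟩
  have hbS : ⟨b, hbD⟩ ∉ S := by
    rintro (⟨-, hbx⟩ | ⟨hbY, -⟩)
    · exact hxb.not_ge hbx
    · exact hG.disjoint.notMem_of_mem_left hb hbY
  obtain ⟨v, hvS, w, hwS, (hvw : G.Adj v w)⟩ := exists_adj_mem_notMem hD haS hbS
  rcases hvS with ⟨hvX, hvx⟩ | ⟨hvY, x', hvx', hx'x⟩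
  · exact absurd (.inr ⟨hG.mem_of_mem_adj hvX hvw, v, hvw.symm, hvx⟩) hwS
  · have hwX : ↑w ∈ X := hG.symm.mem_of_mem_adj hvY hvw
    have hxw : f x ≤ f w := le_of_not_ge fun hwx => hwS (.inl ⟨hwX, hwx⟩)
    exact ⟨v, v.2, (h.adj hG hvY hx hvx' hvw hx'x hxw).symm⟩

lemma exists_adj_of_extremal_adj (h : NeighborsConsecutive G X Y f) (hG : G.IsBipartiteWith X Y)
    (hD : (G.induce D).Preconnected) {a b p q x₁ x₂ x : W}
    (haD : a ∈ D) (hbD : b ∈ D) (hpD : p ∈ D) (hqD : q ∈ D) (hp : p ∈ Y) (hq : q ∈ Y)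
    (hpa : G.Adj p a) (hqb : G.Adj q b) (hpx₁ : G.Adj p x₁) (hqx₂ : G.Adj q x₂)
    (hmin : ∀ x ∈ X, f x₁ ≤ f x) (hmax : ∀ x ∈ X, f x ≤ f x₂) (hx : x ∈ X) :
    ∃ v ∈ D, G.Adj x v := by
  rcases le_or_gt (f x) (f a) with hxa | hax
  · exact ⟨p, hpD, (h.adj hG hp hx hpx₁ hpa (hmin x hx) hxa).symm⟩
  rcases le_or_gt (f b) (f x) with hbx | hxb
  · exact ⟨q, hqD, (h.adj hG hq hx hqb hqx₂ hbx (hmax x hx)).symm⟩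
  · exact h.exists_adj_of_le_of_lt hG hD (hG.symm.mem_of_mem_adj hp hpa) haD
      (hG.symm.mem_of_mem_adj hq hqb) hbD hx hax.le hxb

end NeighborsConsecutive

namespace IsBiconvexWith

lemma dual [LE α] [LE β] (h : IsBiconvexWith G X Y f g) :
    IsBiconvexWith G X Y (OrderDual.toDual ∘ f) (OrderDual.toDual ∘ g) :=
  ⟨h.isBipartiteWith, h.left.dual, h.right.dual⟩

lemma dual_right [LE α] [LE β] (h : IsBiconvexWith G X Y f g) :
    IsBiconvexWith G X Y f (OrderDual.toDual ∘ g) :=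
  ⟨h.isBipartiteWith, h.left, h.right.dual⟩

variable [LinearOrder α] [LinearOrder β]

lemma adj_of_edge_above (h : IsBiconvexWith G X Y f g) (hG : G.Preconnected)
    {a b p x₁ y₁ y₂ : W} (ha : a ∈ X) (hb : b ∈ X) (hp : p ∈ Y)
    (hay₁ : G.Adj a y₁) (hpx₁ : G.Adj p x₁) (hby₂ : G.Adj b y₂)
    (hx₁a : f x₁ ≤ f a) (hy₁p : g y₁ ≤ g p) (hab : f a ≤ f b) (hpy₂ : g p ≤ g y₂) :
    G.Adj a p := by
  have hXY := h.isBipartiteWith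
  by_contra hap
  have ha_lt : ∀ y, G.Adj a y → g y < g p := fun y hay =>
    lt_of_not_ge fun hpy => hap (h.right.adj hXY.symm ha hp hay₁ hay hy₁p hpy)
  have hp_lt : ∀ x, G.Adj p x → f x < f a := fun x hpx =>
    lt_of_not_ge fun hax => hap (h.left.adj hXY hp ha hpx₁ hpx hx₁a hax).symm
  -- `S` is the set of ends of the edges above `(a, p)`; it turns out to be closed under adjacency.
  let S : Set W := {v | v ∈ X ∧ f a ≤ f v ∧ (∃ y, G.Adj v y ∧ g p ≤ g y) ∨
    v ∈ Y ∧ g p ≤ g v ∧ (∃ x, G.Adj v x ∧ f a ≤ f x)}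
  have hbS : b ∈ S := .inl ⟨hb, hab, y₂, hby₂, hpy₂⟩
  have haS : a ∉ S := by
    rintro (⟨-, -, y, hay, hpy⟩ | ⟨haY, -⟩)
    · exact (ha_lt y hay).not_ge hpy
    · exact hXY.disjoint.notMem_of_mem_left ha haY
  obtain ⟨v, hvS, w, hwS, hvw⟩ := exists_adj_mem_notMem hG hbS haS
  rcases hvS with ⟨hvX, hav, y, hvy, hpy⟩ | ⟨hvY, hpv, x, hvx, hax⟩
  · have hwY : w ∈ Y := hXY.mem_of_mem_adj hvX hvw
    have hwp : g w ≤ g p := le_of_not_ge fun hpw => hwS (.inr ⟨hwY, hpw, v, hvw.symm, hav⟩)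
    have hvp : G.Adj v p := h.right.adj hXY.symm hvX hp hvw hvy hwp hpy
    exact (hp_lt v hvp.symm).not_ge hav
  · have hwX : w ∈ X := hXY.symm.mem_of_mem_adj hvY hvw
    have hwa : f w ≤ f a := le_of_not_ge fun haw => hwS (.inl ⟨hwX, haw, v, hvw.symm, hpv⟩)
    have hva : G.Adj v a := h.left.adj hXY hvY ha hvw hvx hwa hax
    exact (ha_lt v hva.symm).not_ge hpv

lemma exists_isPath_isDominatingSet_of_le (h : IsBiconvexWith G X Y f g) (hG : G.Preconnected)
    (hcover : ∀ u, u ∈ X ∨ u ∈ Y) {a b p q x₁ x₂ y₁ y₂ : W}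
    (ha : a ∈ X) (hb : b ∈ X) (hp : p ∈ Y) (hq : q ∈ Y)
    (hay₁ : G.Adj a y₁) (hby₂ : G.Adj b y₂) (hpx₁ : G.Adj p x₁) (hqx₂ : G.Adj q x₂)
    (hxmin : ∀ x ∈ X, f x₁ ≤ f x) (hxmax : ∀ x ∈ X, f x ≤ f x₂)
    (hymin : ∀ y ∈ Y, g y₁ ≤ g y) (hymax : ∀ y ∈ Y, g y ≤ g y₂) (hab : f a ≤ f b) :
    ∃ (s t : W) (P : G.Walk s t), P.IsPath ∧ IsDominatingSet G {v | v ∈ P.support} := by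
  have hap : G.Adj a p := h.adj_of_edge_above hG ha hb hp hay₁ hpx₁ hby₂
    (hxmin a ha) (hymin p hp) hab (hymax p hp)
  have hbq : G.Adj b q := h.dual.adj_of_edge_above hG hb ha hq hby₂ hqx₂ hay₁
    (hxmax b hb) (hymax q hq) hab (hymin q hq)
  obtain ⟨s, t, P, hP, haP, hpP, hbP, hqP⟩ := exists_isPath_through_edges hG hap hbq
  have hD := P.connected_induce_support.preconnected
  have hadj : ∀ u, ∃ v ∈ P.support, G.Adj u v := fun u => (hcover u).elim
    (h.left.exists_adj_of_extremal_adj h.isBipartiteWith hD haP hbP hpP hqP hp hq hap.symm hbq.symm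
      hpx₁ hqx₂ hxmin hxmax)
    (h.right.exists_adj_of_extremal_adj h.isBipartiteWith.symm hD hpP hqP haP hbP ha hb hap hbq
      hay₁ hby₂ hymin hymax)
  exact ⟨s, t, P, hP, fun u => (hadj u).imp fun v hv => ⟨hv.1, .inr hv.2⟩⟩

theorem exists_isPath_isDominatingSet [Finite W] (h : IsBiconvexWith G X Y f g)
    (hG : G.Connected) :
    ∃ (s t : W) (P : G.Walk s t), P.IsPath ∧ IsDominatingSet G {v | v ∈ P.support} := by
  obtain ⟨o⟩ := hG.nonempty
  rcases subsingleton_or_nontrivial W with hW | hW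
  · exact ⟨o, o, .nil, .nil, fun u => ⟨o, Walk.start_mem_support _, .inl (Subsingleton.elim _ _)⟩⟩
  have hXY := h.isBipartiteWith
  have hsupp : ∀ u, u ∈ G.support := Set.eq_univ_iff_forall.1 hG.preconnected.support_eq_univ
  have hcover : ∀ u, u ∈ X ∨ u ∈ Y := fun u => isBipartiteWith_support_subset hXY (hsupp u)
  have hXsupp : X ⊆ G.support := fun x _ => hsupp x
  have hYsupp : Y ⊆ G.support := fun y _ => hsupp y
  obtain ⟨hX, hY⟩ : X.Nonempty ∧ Y.Nonempty := by
    obtain ⟨v, hov⟩ := hsupp o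
    rcases hXY.mem_of_adj hov with ⟨ho, hv⟩ | ⟨ho, hv⟩
    exacts [⟨⟨o, ho⟩, ⟨v, hv⟩⟩, ⟨⟨v, hv⟩, ⟨o, ho⟩⟩]
  obtain ⟨p, hp, x₁, hpx₁, hxmin⟩ := exists_adj_forall_le hXY X.toFinite hX hXsupp f
  obtain ⟨q, hq, x₂, hqx₂, hxmax⟩ :=
    exists_adj_forall_le hXY X.toFinite hX hXsupp (OrderDual.toDual ∘ f)
  obtain ⟨a, ha, y₁, hay₁, hymin⟩ := exists_adj_forall_le hXY.symm Y.toFinite hY hYsupp g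
  obtain ⟨b, hb, y₂, hby₂, hymax⟩ :=
    exists_adj_forall_le hXY.symm Y.toFinite hY hYsupp (OrderDual.toDual ∘ g)
  rcases le_total (f a) (f b) with hab | hba
  · exact h.exists_isPath_isDominatingSet_of_le hG.preconnected hcover ha hb hp hq
      hay₁ hby₂ hpx₁ hqx₂ hxmin hxmax hymin hymax hab
  · exact h.dual_right.exists_isPath_isDominatingSet_of_le hG.preconnected hcover hb ha hp hq
      hby₂ hay₁ hpx₁ hqx₂ hxmin hxmax hymax hymin hba

end IsBiconvexWith

end Biconvex

lemma IsDominatingSet.walkDist_le_one {W : Type*} [DecidableEq W] {G : SimpleGraph W} {a b : W}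
    {P : G.Walk a b} (hP : IsDominatingSet G {v | v ∈ P.support}) (u : W) :
    walkDist G P u ≤ 1 := by
  obtain ⟨v, hv, huv⟩ := hP u
  refine (Finset.inf'_le _ (List.mem_toFinset.2 hv)).trans ?_
  rcases huv with rfl | huv
  · exact dist_self.trans_le zero_le_one
  · exact (dist_eq_one_iff_adj.2 huv).le

lemma pe_le_of_isPath {G : SimpleGraph V} {a b : V} {P : G.Walk a b} {n : ℕ} (hP : P.IsPath)
    (hn : ∀ u, walkDist G P u ≤ n) : pe G ≤ n :=
  calc
    pe G ≤ eccW G P := Nat.sInf_le ⟨a, b, P, hP, rfl⟩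
    _ ≤ n := Finset.sup_le fun u _ => hn u

theorem stmt17_general {α β : Type*} [LinearOrder α] [LinearOrder β] {G : SimpleGraph V}
    (hG : G.Connected) {X Y : Set V} {f : V → α} {g : V → β} (h : IsBiconvexWith G X Y f g) :
    (∃ (a b : V) (P : G.Walk a b), P.IsPath ∧ ∀ u : V, walkDist G P u ≤ 1) ∧ pe G ≤ 1 := by
  obtain ⟨a, b, P, hP, hdom⟩ := h.exists_isPath_isDominatingSet hG
  exact ⟨⟨a, b, P, hP, hdom.walkDist_le_one⟩, pe_le_of_isPath hP hdom.walkDist_le_one⟩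

theorem stmt17 (G : SimpleGraph V) (hG : G.Connected)
    (X Y : Finset V) (hdisj : Disjoint X Y) (hcover : X ∪ Y = Finset.univ)
    (hbip : ∀ u v : V, G.Adj u v → (u ∈ X ∧ v ∈ Y) ∨ (u ∈ Y ∧ v ∈ X))
    (f g : V → ℕ) (hf : Set.InjOn f ↑X) (hg : Set.InjOn g ↑Y)
    (hconvexX : ∀ y ∈ Y, ∀ x₁ ∈ X, ∀ x₂ ∈ X, ∀ x₃ ∈ X,
      G.Adj y x₁ → G.Adj y x₃ → f x₁ ≤ f x₂ → f x₂ ≤ f x₃ → G.Adj y x₂)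
    (hconvexY : ∀ x ∈ X, ∀ y₁ ∈ Y, ∀ y₂ ∈ Y, ∀ y₃ ∈ Y,
      G.Adj x y₁ → G.Adj x y₃ → g y₁ ≤ g y₂ → g y₂ ≤ g y₃ → G.Adj x y₂) :
    (∃ (a b : V) (P : G.Walk a b), P.IsPath ∧ ∀ u : V, walkDist G P u ≤ 1) ∧
      pe G ≤ 1 := by
  exact stmt17_general hG (X := X) (Y := Y)
    ⟨⟨Finset.disjoint_coe.2 hdisj, hbip⟩, hconvexX, hconvexY⟩
end
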